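/- arXiv:1608.08184 — 2 statements merged into one kernel-verified Lean document; each statement's English description precedes it below -/
import Mathlib

section
/- For all polynomials v and w of degree at most p, there holds ∫_{−1}^{1} (I v)'(s) w(s) ds = ∫_{−1}^{1} v'(s) w(s) ds + v(−1) w(−1). -/
/-!
The correction `I v - v` is `-v(-1)` times the Radau polynomial `R = (-1)^p (L_p - L_{p+1}) / 2`,
which takes the values `1` at `-1` and `0` at `1` and is orthogonal to all polynomials of degree
less than `p`. Integrating `∫ R' w` by parts therefore leaves only the boundary term `-w(-1)`.
The orthogonality comes from Rodrigues' formula: `(X ^ 2 - 1) ^ k` vanishes to order `k` at both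
endpoints, so `k` integrations by parts move all derivatives onto the test polynomial.
-/

open Polynomial

/-- The `k`-th Legendre polynomial (Rodrigues' formula), normalized so that `L_k(1) = 1`
and `∫_{−1}^{1} L_k L_j ds = 2δ_{kj}/(2k+1)`. -/
noncomputable def legendre (k : ℕ) : Polynomial ℝ :=
  ((2 ^ k * (Nat.factorial k) : ℝ))⁻¹ •
    ((fun q => Polynomial.derivative q)^[k] ((Polynomial.X ^ 2 - 1) ^ k))

/-- The reconstruction operator `I : P_p → P_{p+1}`,
`I v := v − v(−1)·(−1)^p (L_p − L_{p+1})/2`. -/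
noncomputable def recon (p : ℕ) (v : Polynomial ℝ) : Polynomial ℝ :=
  v - (v.eval (-1) * (-1 : ℝ) ^ p / 2) • (legendre p - legendre (p + 1))

section IntegrationByParts

variable {f q : ℝ[X]} {a b : ℝ} {k : ℕ}

theorem integral_eval_derivative_mul (f q : ℝ[X]) (a b : ℝ) :
    ∫ s in a..b, (derivative f).eval s * q.eval s =
      f.eval b * q.eval b - f.eval a * q.eval a
        - ∫ s in a..b, f.eval s * (derivative q).eval s := by
  have h := intervalIntegral.integral_mul_deriv_eq_deriv_mul
    (fun s _ => q.hasDerivAt s) (fun s _ => f.hasDerivAt s)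
    ((derivative q).continuous.intervalIntegrable a b)
    ((derivative f).continuous.intervalIntegrable a b)
  simpa only [mul_comm] using h

theorem integral_eval_iterate_derivative_mul (ha : (X - C a) ^ k ∣ f) (hb : (X - C b) ^ k ∣ f) :
    ∫ s in a..b, (derivative^[k] f).eval s * q.eval s =
      (-1) ^ k * ∫ s in a..b, f.eval s * (derivative^[k] q).eval s := by
  induction k generalizing f with
  | zero => simp
  | succ k ih =>
    have hfa : f.eval a = 0 := dvd_iff_isRoot.1 ((dvd_pow_self _ k.succ_ne_zero).trans ha)
    have hfb : f.eval b = 0 := dvd_iff_isRoot.1 ((dvd_pow_self _ k.succ_ne_zero).trans hb)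
    have hfa' : (X - C a) ^ k ∣ derivative f :=
      pow_sub_one_dvd_derivative_of_pow_dvd (n := k + 1) ha
    have hfb' : (X - C b) ^ k ∣ derivative f :=
      pow_sub_one_dvd_derivative_of_pow_dvd (n := k + 1) hb
    rw [Function.iterate_succ_apply, Function.iterate_succ_apply',
      ih hfa' hfb', integral_eval_derivative_mul, hfa, hfb]
    ring

theorem integral_eval_iterate_derivative_mul_eq_zero (ha : (X - C a) ^ k ∣ f)
    (hb : (X - C b) ^ k ∣ f) (hq : q.degree < k) :
    ∫ s in a..b, (derivative^[k] f).eval s * q.eval s = 0 := by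
  simp [integral_eval_iterate_derivative_mul ha hb, iterate_derivative_eq_zero_of_degree_lt hq]

end IntegrationByParts

theorem eval_iterate_derivative_X_sub_C_pow_mul {R : Type*} [CommRing R] (a : R) (q : R[X])
    (k : ℕ) : (derivative^[k] ((X - C a) ^ k * q)).eval a = k.factorial * q.eval a := by
  have h := aeval_iterate_derivative_self ((X - C a) ^ k * q) k a (p' := q) (by simp)
  rwa [coe_aeval_eq_eval, nsmul_eq_mul] at h

theorem legendre_eq_smul_iterate_derivative (k : ℕ) :
    legendre k = ((2 ^ k * k.factorial : ℝ))⁻¹ •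
      derivative^[k] ((X - C 1) ^ k * (X - C (-1)) ^ k) := by
  have h : (X ^ 2 - 1 : ℝ[X]) = (X - C 1) * (X - C (-1)) := by
    rw [C_neg, C_1]
    ring
  rw [legendre, h, mul_pow]

theorem legendre_eval_one (k : ℕ) : (legendre k).eval 1 = 1 := by
  rw [legendre_eq_smul_iterate_derivative, eval_smul, eval_iterate_derivative_X_sub_C_pow_mul]
  simp only [eval_pow, eval_sub, eval_X, eval_C, smul_eq_mul]
  rw [show (1 - -1 : ℝ) = 2 by norm_num]
  field_simp

theorem legendre_eval_neg_one (k : ℕ) : (legendre k).eval (-1) = (-1) ^ k := by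
  rw [legendre_eq_smul_iterate_derivative, mul_comm ((X - C 1) ^ k), eval_smul,
    eval_iterate_derivative_X_sub_C_pow_mul]
  simp only [eval_pow, eval_sub, eval_X, eval_C, smul_eq_mul]
  rw [show (-1 - 1 : ℝ) = -1 * 2 by norm_num, mul_pow]
  field_simp

theorem integral_legendre_mul_eq_zero {k : ℕ} {q : ℝ[X]} (hq : q.degree < k) :
    ∫ s in (-1 : ℝ)..1, (legendre k).eval s * q.eval s = 0 := by
  simp only [legendre_eq_smul_iterate_derivative, eval_smul, smul_eq_mul, mul_assoc,
    intervalIntegral.integral_const_mul]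
  rw [integral_eval_iterate_derivative_mul_eq_zero (dvd_mul_left _ _) (dvd_mul_right _ _) hq,
    mul_zero]

/-- The right Radau polynomial of degree `p + 1`, scaled to take the value `1` at `-1`. It is the
polynomial that the reconstruction operator uses to correct the value at `-1`. -/
noncomputable def radau (p : ℕ) : ℝ[X] :=
  ((-1 : ℝ) ^ p / 2) • (legendre p - legendre (p + 1))

theorem radau_eval_one (p : ℕ) : (radau p).eval 1 = 0 := by
  simp [radau, legendre_eval_one]

theorem radau_eval_neg_one (p : ℕ) : (radau p).eval (-1) = 1 := by
  have hsq : (-1 : ℝ) ^ p * (-1) ^ p = 1 := by simp [← mul_pow]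
  simp only [radau, eval_smul, eval_sub, legendre_eval_neg_one, smul_eq_mul, pow_succ]
  linear_combination hsq

theorem integral_radau_mul_eq_zero {p : ℕ} {q : ℝ[X]} (hq : q.degree < p) :
    ∫ s in (-1 : ℝ)..1, (radau p).eval s * q.eval s = 0 := by
  have hq' : q.degree < (p + 1 : ℕ) := hq.trans (mod_cast p.lt_succ_self)
  simp only [radau, eval_smul, eval_sub, smul_eq_mul, mul_assoc, sub_mul,
    intervalIntegral.integral_const_mul]
  rw [intervalIntegral.integral_sub (Continuous.intervalIntegrable (by fun_prop) _ _)
      (Continuous.intervalIntegrable (by fun_prop) _ _),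
    integral_legendre_mul_eq_zero hq, integral_legendre_mul_eq_zero hq', sub_zero, mul_zero]

theorem degree_derivative_lt_of_natDegree_le {R : Type*} [Semiring R] {p : ℕ} {w : R[X]}
    (hw : w.natDegree ≤ p) : (derivative w).degree < p := by
  rcases eq_or_ne w 0 with rfl | hw0
  · simp
  · exact (degree_derivative_lt hw0).trans_le (degree_le_of_natDegree_le hw)

theorem integral_derivative_radau_mul {p : ℕ} {w : ℝ[X]} (hw : w.natDegree ≤ p) :
    ∫ s in (-1 : ℝ)..1, (derivative (radau p)).eval s * w.eval s = -w.eval (-1) := by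
  rw [integral_eval_derivative_mul, radau_eval_one, radau_eval_neg_one,
    integral_radau_mul_eq_zero (degree_derivative_lt_of_natDegree_le hw)]
  ring

theorem recon_eq_sub_smul_radau (p : ℕ) (v : ℝ[X]) :
    recon p v = v - v.eval (-1) • radau p := by
  rw [recon, radau, smul_smul, mul_div_assoc]

theorem recon_deriv_identity_general (p : ℕ) (v w : ℝ[X]) (hw : w.natDegree ≤ p) :
    ∫ s in (-1 : ℝ)..1, (derivative (recon p v)).eval s * w.eval s =
      (∫ s in (-1 : ℝ)..1, (derivative v).eval s * w.eval s) + v.eval (-1) * w.eval (-1) :=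
  calc
    _ = ∫ s in (-1 : ℝ)..1, ((derivative v).eval s * w.eval s -
          v.eval (-1) * ((derivative (radau p)).eval s * w.eval s)) := by
      simp only [recon_eq_sub_smul_radau, derivative_sub, derivative_smul, eval_sub, eval_smul,
        smul_eq_mul, sub_mul, mul_assoc]
    _ = (∫ s in (-1 : ℝ)..1, (derivative v).eval s * w.eval s) -
          v.eval (-1) * ∫ s in (-1 : ℝ)..1, (derivative (radau p)).eval s * w.eval s := by
      rw [intervalIntegral.integral_sub (Continuous.intervalIntegrable (by fun_prop) _ _)
        (Continuous.intervalIntegrable (by fun_prop) _ _), intervalIntegral.integral_const_mul]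
    _ = _ := by
      rw [integral_derivative_radau_mul hw]
      ring

/-- **Integration-by-parts identity for the reconstruction.** For all polynomials `v`, `w` of
degree at most `p`, `∫_{−1}^{1} (I v)' w ds = ∫_{−1}^{1} v' w ds + v(−1) w(−1)`. -/
theorem recon_deriv_identity (p : ℕ) (v w : Polynomial ℝ)
    (hv : v.natDegree ≤ p) (hw : w.natDegree ≤ p) :
    (∫ s in (-1 : ℝ)..1, (Polynomial.derivative (recon p v)).eval s * w.eval s)
      = (∫ s in (-1 : ℝ)..1, (Polynomial.derivative v).eval s * w.eval s)
        + v.eval (-1) * w.eval (-1) :=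
  recon_deriv_identity_general p v w hw
end

section
/- For any symmetric positive definite matrices A and M, any integer p ≥ 0 and any τ > 0, the bilinear form L(u,v) := B(u,Pv) satisfies, for all v, w ∈ V_p: L(v,v) ≥ ‖v‖²_D and |L(v,w)| ≤ 2 ‖v‖_D ‖w‖_D, where ‖v‖_D := √D(v,v) and D(u,v) := ∫_{−1}^{1} ((I u)'(s), (I v)'(s))_{MA⁻¹M} ds + (τ²/4) ∫_{−1}^{1} (u(s), v(s))_A ds. -/
open Matrix Polynomial

/-- Evaluation at `s` of the `ℝⁿ`-valued polynomial with coefficients `c` (degree ≤ p). -/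
noncomputable def pev {n p : ℕ} (c : Fin (p + 1) → Fin n → ℝ) (s : ℝ) : Fin n → ℝ :=
  ∑ j : Fin (p + 1), s ^ (j : ℕ) • c j

/-- Evaluation at `s` of the derivative of the `ℝⁿ`-valued polynomial with coefficients `c`. -/
noncomputable def pdev {n p : ℕ} (c : Fin (p + 1) → Fin n → ℝ) (s : ℝ) : Fin n → ℝ :=
  ∑ j : Fin (p + 1), ((((j : ℕ) : ℝ)) * s ^ ((j : ℕ) - 1)) • c j

/-- Evaluation at `s` of `(I v)'`, the derivative of the reconstruction `I v` of the
`ℝⁿ`-valued polynomial `v` with coefficients `c`, where the reconstruction operator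
`I v := v − v(−1)·(−1)^p (L_p − L_{p+1})/2` acts coefficientwise. -/
noncomputable def reconD {n p : ℕ} (c : Fin (p + 1) → Fin n → ℝ) (s : ℝ) : Fin n → ℝ :=
  pdev c s -
    ((-1 : ℝ) ^ p * (Polynomial.derivative (legendre p - legendre (p + 1))).eval s / 2) •
      pev c (-1)

/-- The DG bilinear form `B(u, ·)` applied to a test function `g : ℝ → ℝⁿ`:
`B(u,g) = ∫_{−1}^{1} (u'(s), g(s))_M ds + (u(−1), g(−1))_M + (τ/2) ∫_{−1}^{1} (u(s), g(s))_A ds`,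
where `(u,v)_M := vᵀ M u`. -/
noncomputable def Bform {n p : ℕ} (M A : Matrix (Fin n) (Fin n) ℝ) (τ : ℝ)
    (c : Fin (p + 1) → Fin n → ℝ) (g : ℝ → Fin n → ℝ) : ℝ :=
  (∫ s in (-1 : ℝ)..1, g s ⬝ᵥ (M *ᵥ pdev c s)) + g (-1) ⬝ᵥ (M *ᵥ pev c (-1)) +
    (τ / 2) * ∫ s in (-1 : ℝ)..1, g s ⬝ᵥ (A *ᵥ pev c s)

/-- The operator `P v := A⁻¹ M (I v)' + (τ/2) v`, evaluated at `s`. -/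
noncomputable def Pop {n p : ℕ} (M A : Matrix (Fin n) (Fin n) ℝ) (τ : ℝ)
    (c : Fin (p + 1) → Fin n → ℝ) (s : ℝ) : Fin n → ℝ :=
  (A⁻¹ * M) *ᵥ reconD c s + (τ / 2) • pev c s

/-- The auxiliary bilinear form
`D(u,v) := ∫_{−1}^{1} ((I u)'(s), (I v)'(s))_{MA⁻¹M} ds + (τ²/4) ∫_{−1}^{1} (u(s), v(s))_A ds`. -/
noncomputable def Dform {n p : ℕ} (M A : Matrix (Fin n) (Fin n) ℝ) (τ : ℝ)
    (c d : Fin (p + 1) → Fin n → ℝ) : ℝ :=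
  (∫ s in (-1 : ℝ)..1, reconD d s ⬝ᵥ ((M * A⁻¹ * M) *ᵥ reconD c s)) +
    (τ ^ 2 / 4) * ∫ s in (-1 : ℝ)..1, pev d s ⬝ᵥ (A *ᵥ pev c s)

/-!
The weight `(-1)^p (L_p - L_{p+1})' / 2` in `(I v)'` represents `-g(-1)` on polynomials `g` of
degree at most `p`: integrate by parts, and use that `L_p`, `L_{p+1}` are orthogonal to `g'`
while `L_p - L_{p+1}` is `0` at `1` and `2 (-1)^p` at `-1`. Testing with `g ∈ V_p`, the jump term
of `B` is thus absorbed into `(I u)'`, and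
`B(u, g) = ∫ (A⁻¹ M (I u)' + (τ/2) u, g)_A = ∫ (P u, g)_A`; in particular
`L(u, v) = ∫ (P u, P v)_A`.

Expanding the square gives `∫ ‖P v‖_A² = ‖v‖_D² + τ ∫ ((I v)', v)_M`, where
`∫ ((I v)', v)_M = (‖v(1)‖_M² + ‖v(-1)‖_M²) / 2 ≥ 0`. This is the lower bound. Changing the sign
of `τ` in the expansion and adding, `∫ ‖P v‖_A² ≤ 2 ‖v‖_D²`, so Cauchy–Schwarz gives the upper
bound.
-/

/-! ### Legendre polynomials -/

lemma sq_sub_one_pow_eq_mul {R : Type*} [CommRing R] {a : R} (ha : a ^ 2 = 1) (k : ℕ) :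
    ((X : R[X]) ^ 2 - 1) ^ k = (X - C a) ^ k * (X + C a) ^ k := by
  have hC : (C a) ^ 2 = 1 := by rw [← C_pow, ha, C_1]
  rw [← mul_pow, ← hC]
  ring

lemma eval_iterate_derivative_sq_sub_one_pow_of_lt {R : Type*} [CommRing R] {a : R}
    (ha : a ^ 2 = 1) {j k : ℕ} (hjk : j < k) :
    (derivative^[j] (((X : R[X]) ^ 2 - 1) ^ k)).eval a = 0 := by
  rw [← coe_aeval_eq_eval]
  exact aeval_iterate_derivative_of_lt _ k a (by simpa using sq_sub_one_pow_eq_mul ha k) hjk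

lemma eval_iterate_derivative_sq_sub_one_pow_self {R : Type*} [CommRing R] {a : R}
    (ha : a ^ 2 = 1) (k : ℕ) :
    (derivative^[k] (((X : R[X]) ^ 2 - 1) ^ k)).eval a = k.factorial * (2 * a) ^ k := by
  rw [← coe_aeval_eq_eval, aeval_iterate_derivative_self _ k a
    (by simpa using sq_sub_one_pow_eq_mul ha k)]
  simp [two_mul]

lemma eval_legendre_of_sq_eq_one {a : ℝ} (ha : a ^ 2 = 1) (k : ℕ) :
    (legendre k).eval a = a ^ k := by
  rw [legendre, eval_smul, eval_iterate_derivative_sq_sub_one_pow_self ha, smul_eq_mul, mul_pow]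
  field_simp

lemma natDegree_legendre_le (k : ℕ) : (legendre k).natDegree ≤ k := by
  have hpow : (((X : ℝ[X]) ^ 2 - 1) ^ k).natDegree ≤ k * 2 :=
    natDegree_pow_le_of_le k (by compute_degree)
  have hderiv := natDegree_iterate_derivative (((X : ℝ[X]) ^ 2 - 1) ^ k) k
  exact (natDegree_smul_le _ _).trans (hderiv.trans (by lia))

lemma integral_eval_mul_eval_derivative (a b : ℝ) (q r : ℝ[X]) :
    ∫ s in a..b, q.eval s * (derivative r).eval s =
      q.eval b * r.eval b - q.eval a * r.eval a - ∫ s in a..b, (derivative q).eval s * r.eval s :=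
  intervalIntegral.integral_mul_deriv_eq_deriv_mul (fun s _ => q.hasDerivAt s)
    (fun s _ => r.hasDerivAt s) ((derivative q).continuous.intervalIntegrable _ _)
    ((derivative r).continuous.intervalIntegrable _ _)

lemma integral_eval_mul_eval_iterate_derivative_eq_zero {a b : ℝ} {q w : ℝ[X]} {j : ℕ}
    (ha : ∀ i < j, (derivative^[i] w).eval a = 0) (hb : ∀ i < j, (derivative^[i] w).eval b = 0)
    (hq : derivative^[j] q = 0) :
    ∫ s in a..b, q.eval s * (derivative^[j] w).eval s = 0 := by
  induction j generalizing q with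
  | zero => simp [show q = 0 from hq]
  | succ j ih =>
    rw [Function.iterate_succ_apply', integral_eval_mul_eval_derivative, ha j j.lt_succ_self,
      hb j j.lt_succ_self, ih (fun i hi => ha i (by lia)) (fun i hi => hb i (by lia)) hq]
    simp

lemma integral_eval_mul_eval_legendre_eq_zero {k : ℕ} {q : ℝ[X]} (hq : derivative^[k] q = 0) :
    ∫ s in (-1 : ℝ)..1, q.eval s * (legendre k).eval s = 0 := by
  have horth : ∫ s in (-1 : ℝ)..1, q.eval s * (derivative^[k] ((X ^ 2 - 1) ^ k)).eval s = 0 :=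
    integral_eval_mul_eval_iterate_derivative_eq_zero
      (fun _ => eval_iterate_derivative_sq_sub_one_pow_of_lt (by norm_num))
      (fun _ => eval_iterate_derivative_sq_sub_one_pow_of_lt (by norm_num)) hq
  simp only [legendre, eval_smul, smul_eq_mul, mul_left_comm]
  rw [intervalIntegral.integral_const_mul, horth, mul_zero]

/-- The derivative of the lifting polynomial `(-1)^p (L_p - L_{p+1}) / 2`, so that
`(I v)' = v' - v(-1) · liftDeriv p`. -/
noncomputable def liftDeriv (p : ℕ) : ℝ[X] :=
  C ((-1) ^ p / 2) * derivative (legendre p - legendre (p + 1))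

lemma natDegree_liftDeriv_le (p : ℕ) : (liftDeriv p).natDegree ≤ p := by
  have hsub : (legendre p - legendre (p + 1)).natDegree ≤ p + 1 :=
    natDegree_sub_le_of_le ((natDegree_legendre_le p).trans p.le_succ) (natDegree_legendre_le _)
      |>.trans (max_self _).le
  exact (natDegree_C_mul_le _ _).trans ((natDegree_derivative_le _).trans (by lia))

lemma integral_eval_mul_eval_liftDeriv {p : ℕ} {q : ℝ[X]} (hq : q.natDegree ≤ p) :
    ∫ s in (-1 : ℝ)..1, q.eval s * (liftDeriv p).eval s = -q.eval (-1) := by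
  have horth : ∀ k, p ≤ k →
      ∫ s in (-1 : ℝ)..1, (derivative q).eval s * (legendre k).eval s = 0 := fun k hk =>
    integral_eval_mul_eval_legendre_eq_zero <| by
      rw [← Function.iterate_succ_apply]
      exact iterate_derivative_eq_zero (by lia)
  have hsub : ∫ s in (-1 : ℝ)..1,
      (derivative q).eval s * (legendre p - legendre (p + 1)).eval s = 0 := by
    simp only [eval_sub, mul_sub]
    rw [intervalIntegral.integral_sub, horth p le_rfl, horth (p + 1) p.le_succ, sub_zero] <;>
      exact (Continuous.mul (by fun_prop) (by fun_prop)).intervalIntegrable _ _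
  simp only [liftDeriv, eval_mul, eval_C, mul_left_comm _ ((-1 : ℝ) ^ p / 2)]
  rw [intervalIntegral.integral_const_mul, integral_eval_mul_eval_derivative, hsub]
  simp only [eval_sub, eval_legendre_of_sq_eq_one (one_pow 2 : (1 : ℝ) ^ 2 = 1),
    eval_legendre_of_sq_eq_one (by norm_num : (-1 : ℝ) ^ 2 = 1), one_pow, pow_succ]
  have hsign : (-1 : ℝ) ^ p * (-1) ^ p = 1 := by rw [← mul_pow]; simp
  linear_combination -q.eval (-1) * hsign

/-! ### The integrated matrix form -/

lemma dotProduct_mulVec_comm_of_isSymm {R ι : Type*} [CommSemiring R] [Fintype ι]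
    {N : Matrix ι ι R} (hN : N.IsSymm) (x y : ι → R) : x ⬝ᵥ (N *ᵥ y) = y ⬝ᵥ (N *ᵥ x) := by
  rw [← dotProduct_transpose_mulVec, hN.eq]

lemma hasDerivAt_dotProduct {ι : Type*} [Fintype ι] {f g : ℝ → ι → ℝ} {f' g' : ι → ℝ} {s : ℝ}
    (hf : HasDerivAt f f' s) (hg : HasDerivAt g g' s) :
    HasDerivAt (fun s => f s ⬝ᵥ g s) (f' ⬝ᵥ g s + f s ⬝ᵥ g') s := by
  simp only [dotProduct, ← Finset.sum_add_distrib]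
  exact HasDerivAt.fun_sum fun i _ => (hasDerivAt_pi.1 hf i).mul (hasDerivAt_pi.1 hg i)

lemma hasDerivAt_mulVec {ι κ : Type*} [Fintype ι] [Finite κ] (N : Matrix κ ι ℝ) {f : ℝ → ι → ℝ}
    {f' : ι → ℝ} {s : ℝ} (hf : HasDerivAt f f' s) :
    HasDerivAt (fun s => N *ᵥ f s) (N *ᵥ f') s :=
  have := Fintype.ofFinite κ
  N.mulVecLin.toContinuousLinearMap.hasFDerivAt.comp_hasDerivAt s hf

section IntegralForm

variable {ι : Type*} [Fintype ι]

/-- The pointwise action of a matrix on a continuous vector-valued function. -/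
def mulVecMap (N : Matrix ι ι ℝ) (f : C(ℝ, ι → ℝ)) : C(ℝ, ι → ℝ) where
  toFun s := N *ᵥ f s
  continuous_toFun := continuous_const.matrix_mulVec f.continuous

lemma intervalIntegrable_dotProduct_mulVec (a b : ℝ) (N : Matrix ι ι ℝ) (f g : C(ℝ, ι → ℝ)) :
    IntervalIntegrable (fun s => f s ⬝ᵥ (N *ᵥ g s)) MeasureTheory.volume a b :=
  (f.continuous.dotProduct (mulVecMap N g).continuous).intervalIntegrable a b

/-- The bilinear form `(f, g) ↦ ∫_a^b (g(s), f(s))_N ds = ∫_a^b f(s)ᵀ N g(s) ds`. It lives on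
continuous functions, where all the integrals involved are meaningful. -/
noncomputable def integralForm (a b : ℝ) (N : Matrix ι ι ℝ) :
    LinearMap.BilinForm ℝ C(ℝ, ι → ℝ) :=
  LinearMap.mk₂ ℝ (fun f g => ∫ s in a..b, f s ⬝ᵥ (N *ᵥ g s))
    (fun f₁ f₂ g => by
      simp only [ContinuousMap.add_apply, add_dotProduct]
      exact intervalIntegral.integral_add (intervalIntegrable_dotProduct_mulVec a b N f₁ g)
        (intervalIntegrable_dotProduct_mulVec a b N f₂ g))
    (fun t f g => by simp [smul_dotProduct])
    (fun f g₁ g₂ => by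
      simp only [ContinuousMap.add_apply, mulVec_add, dotProduct_add]
      exact intervalIntegral.integral_add (intervalIntegrable_dotProduct_mulVec a b N f g₁)
        (intervalIntegrable_dotProduct_mulVec a b N f g₂))
    (fun t f g => by simp [mulVec_smul, dotProduct_smul])

variable {a b : ℝ} {N : Matrix ι ι ℝ}

lemma integralForm_apply (f g : C(ℝ, ι → ℝ)) :
    integralForm a b N f g = ∫ s in a..b, f s ⬝ᵥ (N *ᵥ g s) := rfl

lemma integralForm_mulVecMap_right (K : Matrix ι ι ℝ) (f g : C(ℝ, ι → ℝ)) :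
    integralForm a b N f (mulVecMap K g) = integralForm a b (N * K) f g := by
  simp [integralForm_apply, mulVecMap]

lemma integralForm_comm (hN : N.IsSymm) (f g : C(ℝ, ι → ℝ)) :
    integralForm a b N f g = integralForm a b N g f := by
  simp only [integralForm_apply, dotProduct_mulVec_comm_of_isSymm hN (f _)]

lemma integralForm_self_nonneg (hab : a ≤ b) (hN : N.PosSemidef) (f : C(ℝ, ι → ℝ)) :
    0 ≤ integralForm a b N f f :=
  intervalIntegral.integral_nonneg hab fun s _ => by
    simpa using hN.dotProduct_mulVec_nonneg (f s)

lemma two_mul_integralForm_deriv (hN : N.IsSymm) {f f' : C(ℝ, ι → ℝ)}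
    (hf : ∀ s, HasDerivAt f (f' s) s) :
    2 * integralForm a b N f f' = f b ⬝ᵥ (N *ᵥ f b) - f a ⬝ᵥ (N *ᵥ f a) := by
  have hderiv : ∀ s, HasDerivAt (fun s => f s ⬝ᵥ (N *ᵥ f s)) (2 * (f s ⬝ᵥ (N *ᵥ f' s))) s := by
    intro s
    rw [two_mul]
    nth_rw 1 [dotProduct_mulVec_comm_of_isSymm hN]
    exact hasDerivAt_dotProduct (hf s) (hasDerivAt_mulVec N (hf s))
  rw [integralForm_apply, ← intervalIntegral.integral_const_mul]
  exact intervalIntegral.integral_eq_sub_of_hasDerivAt (fun s _ => hderiv s)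
    ((intervalIntegrable_dotProduct_mulVec a b N f f').const_mul 2)

end IntegralForm

/-! ### Vector-valued polynomials -/

/-- The polynomial `q` times the fixed vector `x`. -/
noncomputable def polySMul {E : Type*} [AddCommMonoid E] [Module ℝ E] [TopologicalSpace E]
    [ContinuousSMul ℝ E] (q : ℝ[X]) (x : E) : C(ℝ, E) where
  toFun s := q.eval s • x
  continuous_toFun := q.continuous.smul continuous_const

/-- The space `V_p` of `E`-valued polynomials of degree at most `p`, seen as functions. -/
def polySpace (p : ℕ) (E : Type*) [AddCommMonoid E] [Module ℝ E] [TopologicalSpace E]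
    [ContinuousAdd E] [ContinuousSMul ℝ E] : Submodule ℝ C(ℝ, E) :=
  Submodule.span ℝ {f | ∃ q : ℝ[X], q.natDegree ≤ p ∧ ∃ x : E, f = polySMul q x}

lemma polySMul_mem_polySpace {E : Type*} [AddCommMonoid E] [Module ℝ E] [TopologicalSpace E]
    [ContinuousAdd E] [ContinuousSMul ℝ E] {p : ℕ} {q : ℝ[X]} (hq : q.natDegree ≤ p)
    (x : E) : polySMul q x ∈ polySpace p E :=
  Submodule.subset_span ⟨q, hq, x, rfl⟩

lemma mulVecMap_mem_polySpace {ι : Type*} [Fintype ι] {p : ℕ} (N : Matrix ι ι ℝ)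
    {f : C(ℝ, ι → ℝ)} (hf : f ∈ polySpace p (ι → ℝ)) : mulVecMap N f ∈ polySpace p (ι → ℝ) := by
  induction hf using Submodule.span_induction with
  | mem f hf =>
    obtain ⟨q, hq, x, rfl⟩ := hf
    convert polySMul_mem_polySpace hq (N *ᵥ x) using 1
    ext1 s
    exact mulVec_smul N (q.eval s) x
  | zero =>
    convert zero_mem (polySpace p (ι → ℝ)) using 1
    ext1
    exact mulVec_zero N
  | add f g _ _ hf hg =>
    convert add_mem hf hg using 1
    ext1 s
    exact mulVec_add N (f s) (g s)
  | smul t f _ hf =>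
    convert Submodule.smul_mem _ t hf using 1
    ext1 s
    exact mulVec_smul N t (f s)

lemma integralForm_polySMul_liftDeriv {ι : Type*} [Fintype ι] {p : ℕ} (N : Matrix ι ι ℝ)
    {g : C(ℝ, ι → ℝ)} (hg : g ∈ polySpace p (ι → ℝ)) (y : ι → ℝ) :
    integralForm (-1) 1 N g (polySMul (liftDeriv p) y) = -(g (-1) ⬝ᵥ (N *ᵥ y)) := by
  induction hg using Submodule.span_induction with
  | mem g hg =>
    obtain ⟨q, hq, x, rfl⟩ := hg
    simp only [integralForm_apply, polySMul, ContinuousMap.coe_mk, mulVec_smul, dotProduct_smul,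
      smul_dotProduct, smul_eq_mul, ← mul_assoc]
    rw [intervalIntegral.integral_mul_const]
    simp only [mul_comm ((liftDeriv p).eval _)]
    rw [integral_eval_mul_eval_liftDeriv hq, neg_mul]
  | zero => simp
  | add f g _ _ hf hg => simp [hf, hg, add_dotProduct, add_comm]
  | smul t f _ hf => simp [hf, smul_dotProduct]

section Coefficients

variable {n p : ℕ}

/-- `v ∈ V_p` as a continuous function, from its coefficients. -/
noncomputable def pevMap (c : Fin (p + 1) → Fin n → ℝ) : C(ℝ, Fin n → ℝ) where
  toFun := pev c
  continuous_toFun := by unfold pev; fun_prop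

/-- `v'` as a continuous function, from the coefficients of `v ∈ V_p`. -/
noncomputable def pdevMap (c : Fin (p + 1) → Fin n → ℝ) : C(ℝ, Fin n → ℝ) where
  toFun := pdev c
  continuous_toFun := by unfold pdev; fun_prop

/-- `(I v)'` as a continuous function, from the coefficients of `v ∈ V_p`. -/
noncomputable def reconDMap (c : Fin (p + 1) → Fin n → ℝ) : C(ℝ, Fin n → ℝ) where
  toFun := reconD c
  continuous_toFun := (pdevMap c).continuous.sub (by fun_prop)

/-- `P v` as a continuous function, from the coefficients of `v ∈ V_p`. -/
noncomputable def PopMap (M A : Matrix (Fin n) (Fin n) ℝ) (τ : ℝ)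
    (c : Fin (p + 1) → Fin n → ℝ) : C(ℝ, Fin n → ℝ) :=
  mulVecMap (A⁻¹ * M) (reconDMap c) + (τ / 2) • pevMap c

lemma hasDerivAt_pevMap (c : Fin (p + 1) → Fin n → ℝ) (s : ℝ) :
    HasDerivAt (pevMap c) (pdevMap c s) s := by
  change HasDerivAt (fun s => ∑ j : Fin (p + 1), s ^ (j : ℕ) • c j) (pdev c s) s
  exact HasDerivAt.fun_sum fun j _ => (hasDerivAt_pow (j : ℕ) s).smul_const (c j)

lemma reconDMap_eq (c : Fin (p + 1) → Fin n → ℝ) :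
    reconDMap c = pdevMap c - polySMul (liftDeriv p) (pevMap c (-1)) := by
  ext1 s
  change reconD c s = pdev c s - (liftDeriv p).eval s • pev c (-1)
  rw [reconD, liftDeriv, eval_mul, eval_C, div_mul_eq_mul_div]

lemma pevMap_mem_polySpace (c : Fin (p + 1) → Fin n → ℝ) :
    pevMap c ∈ polySpace p (Fin n → ℝ) := by
  have hsum : pevMap c = ∑ j : Fin (p + 1), polySMul (X ^ (j : ℕ)) (c j) := by
    ext1 s
    simp [pevMap, pev, polySMul]
  rw [hsum]
  exact sum_mem fun j _ =>
    polySMul_mem_polySpace ((natDegree_X_pow_le _).trans (by lia)) (c j)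

lemma pdevMap_mem_polySpace (c : Fin (p + 1) → Fin n → ℝ) :
    pdevMap c ∈ polySpace p (Fin n → ℝ) := by
  have hsum : pdevMap c = ∑ j : Fin (p + 1), polySMul (derivative (X ^ (j : ℕ))) (c j) := by
    ext1 s
    simp [pdevMap, pdev, polySMul, derivative_X_pow]
  rw [hsum]
  exact sum_mem fun j _ => polySMul_mem_polySpace
    ((natDegree_derivative_le _).trans (by rw [natDegree_X_pow]; lia)) (c j)

lemma PopMap_mem_polySpace (M A : Matrix (Fin n) (Fin n) ℝ) (τ : ℝ)
    (c : Fin (p + 1) → Fin n → ℝ) : PopMap M A τ c ∈ polySpace p (Fin n → ℝ) := by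
  have hrecon : reconDMap c ∈ polySpace p (Fin n → ℝ) := by
    rw [reconDMap_eq]
    exact sub_mem (pdevMap_mem_polySpace c) (polySMul_mem_polySpace (natDegree_liftDeriv_le p) _)
  exact add_mem (mulVecMap_mem_polySpace _ hrecon)
    (Submodule.smul_mem _ _ (pevMap_mem_polySpace c))

/-! ### The forms `B` and `D` -/

lemma integralForm_reconDMap (N : Matrix (Fin n) (Fin n) ℝ) (c : Fin (p + 1) → Fin n → ℝ)
    {g : C(ℝ, Fin n → ℝ)} (hg : g ∈ polySpace p (Fin n → ℝ)) :
    integralForm (-1) 1 N g (reconDMap c) =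
      integralForm (-1) 1 N g (pdevMap c) + g (-1) ⬝ᵥ (N *ᵥ pevMap c (-1)) := by
  rw [reconDMap_eq, map_sub, integralForm_polySMul_liftDeriv N hg, sub_neg_eq_add]

variable {M A : Matrix (Fin n) (Fin n) ℝ}

lemma integralForm_PopMap (M : Matrix (Fin n) (Fin n) ℝ) (hA : IsUnit A) (a b τ : ℝ)
    (c : Fin (p + 1) → Fin n → ℝ) (g : C(ℝ, Fin n → ℝ)) :
    integralForm a b A g (PopMap M A τ c) =
      integralForm a b M g (reconDMap c) + τ / 2 * integralForm a b A g (pevMap c) := by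
  rw [PopMap, map_add, map_smul, integralForm_mulVecMap_right,
    mul_nonsing_inv_cancel_left _ _ ((isUnit_iff_isUnit_det A).1 hA), smul_eq_mul]

lemma Bform_eq_integralForm_PopMap (M : Matrix (Fin n) (Fin n) ℝ) (hA : IsUnit A) (τ : ℝ)
    (c : Fin (p + 1) → Fin n → ℝ) {g : C(ℝ, Fin n → ℝ)} (hg : g ∈ polySpace p (Fin n → ℝ)) :
    Bform M A τ c g = integralForm (-1) 1 A g (PopMap M A τ c) := by
  rw [integralForm_PopMap M hA, integralForm_reconDMap M c hg]
  rfl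

lemma Bform_Pop_eq_integralForm (hA : IsUnit A) (τ : ℝ) (c d : Fin (p + 1) → Fin n → ℝ) :
    Bform M A τ c (fun s => Pop M A τ d s) =
      integralForm (-1) 1 A (PopMap M A τ d) (PopMap M A τ c) :=
  Bform_eq_integralForm_PopMap M hA τ c (PopMap_mem_polySpace M A τ d)

lemma integralForm_pevMap_reconDMap_nonneg (hM : M.PosSemidef) (c : Fin (p + 1) → Fin n → ℝ) :
    0 ≤ integralForm (-1) 1 M (pevMap c) (reconDMap c) := by
  have hparts := two_mul_integralForm_deriv (a := -1) (b := 1)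
    (isHermitian_iff_isSymm.1 hM.isHermitian) (hasDerivAt_pevMap c)
  have hright : 0 ≤ pevMap c 1 ⬝ᵥ (M *ᵥ pevMap c 1) := hM.dotProduct_mulVec_nonneg _
  have hleft : 0 ≤ pevMap c (-1) ⬝ᵥ (M *ᵥ pevMap c (-1)) := hM.dotProduct_mulVec_nonneg _
  rw [integralForm_reconDMap M c (pevMap_mem_polySpace c)]
  linarith

lemma integralForm_PopMap_self (hM : M.IsSymm) (hAsymm : A.IsSymm) (hA : IsUnit A) (τ : ℝ)
    (c : Fin (p + 1) → Fin n → ℝ) :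
    integralForm (-1) 1 A (PopMap M A τ c) (PopMap M A τ c) =
      Dform M A τ c c + τ * integralForm (-1) 1 M (pevMap c) (reconDMap c) := by
  have hrecon : integralForm (-1) 1 M (PopMap M A τ c) (reconDMap c) =
      integralForm (-1) 1 (M * A⁻¹ * M) (reconDMap c) (reconDMap c) +
        τ / 2 * integralForm (-1) 1 M (pevMap c) (reconDMap c) := by
    rw [integralForm_comm hM, PopMap, map_add, map_smul, integralForm_mulVecMap_right,
      integralForm_comm hM _ (pevMap c), ← mul_assoc]
    rfl
  have hpev : integralForm (-1) 1 A (PopMap M A τ c) (pevMap c) =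
      integralForm (-1) 1 M (pevMap c) (reconDMap c) +
        τ / 2 * integralForm (-1) 1 A (pevMap c) (pevMap c) := by
    rw [integralForm_comm hAsymm]
    exact integralForm_PopMap M hA (-1) 1 τ c (pevMap c)
  have hD : Dform M A τ c c =
      integralForm (-1) 1 (M * A⁻¹ * M) (reconDMap c) (reconDMap c) +
        τ ^ 2 / 4 * integralForm (-1) 1 A (pevMap c) (pevMap c) := rfl
  rw [integralForm_PopMap M hA, hrecon, hpev, hD]
  ring

lemma integralForm_PopMap_self_le (hM : M.IsSymm) (hA : A.PosDef) (τ : ℝ)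
    (c : Fin (p + 1) → Fin n → ℝ) :
    integralForm (-1) 1 A (PopMap M A τ c) (PopMap M A τ c) ≤ 2 * Dform M A τ c c := by
  have hAsymm := isHermitian_iff_isSymm.1 hA.isHermitian
  have hexpand := integralForm_PopMap_self hM hAsymm hA.isUnit τ c
  have hexpand_neg := integralForm_PopMap_self hM hAsymm hA.isUnit (-τ) c
  have hD : Dform M A (-τ) c c = Dform M A τ c c := by simp [Dform]
  have hnonneg :=
    integralForm_self_nonneg (by norm_num : (-1 : ℝ) ≤ 1) hA.posSemidef (PopMap M A (-τ) c)
  linarith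

lemma Dform_self_le_Bform_Pop (hM : M.PosSemidef) (hA : A.PosDef) {τ : ℝ} (hτ : 0 ≤ τ)
    (c : Fin (p + 1) → Fin n → ℝ) :
    Dform M A τ c c ≤ Bform M A τ c (fun s => Pop M A τ c s) := by
  rw [Bform_Pop_eq_integralForm hA.isUnit,
    integralForm_PopMap_self (isHermitian_iff_isSymm.1 hM.isHermitian)
      (isHermitian_iff_isSymm.1 hA.isHermitian) hA.isUnit]
  exact le_add_of_nonneg_right (mul_nonneg hτ (integralForm_pevMap_reconDMap_nonneg hM c))

lemma abs_Bform_Pop_le (hM : M.IsSymm) (hA : A.PosDef) (τ : ℝ) (c d : Fin (p + 1) → Fin n → ℝ) :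
    |Bform M A τ c (fun s => Pop M A τ d s)| ≤ 2 * √(Dform M A τ c c) * √(Dform M A τ d d) := by
  set a := integralForm (-1) 1 A
  have hnonneg : ∀ f, 0 ≤ a f f := integralForm_self_nonneg (by norm_num) hA.posSemidef
  have hcs := a.apply_sq_le_of_symm hnonneg
    ⟨integralForm_comm (isHermitian_iff_isSymm.1 hA.isHermitian)⟩
  have hle : ∀ e : Fin (p + 1) → Fin n → ℝ, a (PopMap M A τ e) (PopMap M A τ e) ≤
    2 * Dform M A τ e e := integralForm_PopMap_self_le hM hA τ
  have hDnonneg : ∀ e : Fin (p + 1) → Fin n → ℝ, 0 ≤ Dform M A τ e e := fun e => by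
    linarith [hnonneg (PopMap M A τ e), hle e]
  rw [Bform_Pop_eq_integralForm hA.isUnit]
  refine abs_le_of_sq_le_sq ?_ (by positivity)
  calc a (PopMap M A τ d) (PopMap M A τ c) ^ 2
    _ ≤ a (PopMap M A τ d) (PopMap M A τ d) * a (PopMap M A τ c) (PopMap M A τ c) := hcs _ _
    _ ≤ (2 * Dform M A τ d d) * (2 * Dform M A τ c c) :=
      mul_le_mul (hle d) (hle c) (hnonneg _) (mul_nonneg zero_le_two (hDnonneg d))
    _ = (2 * √(Dform M A τ c c) * √(Dform M A τ d d)) ^ 2 := by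
      rw [mul_pow, mul_pow, Real.sq_sqrt (hDnonneg c), Real.sq_sqrt (hDnonneg d)]
      ring

end Coefficients

theorem Lform_Dform_bounds_general {n p : ℕ} {M A : Matrix (Fin n) (Fin n) ℝ}
    (hM : M.PosSemidef) (hA : A.PosDef) {τ : ℝ} (hτ : 0 ≤ τ) (c d : Fin (p + 1) → Fin n → ℝ) :
    Dform M A τ c c ≤ Bform M A τ c (fun s => Pop M A τ c s) ∧
      |Bform M A τ c (fun s => Pop M A τ d s)| ≤
        2 * √(Dform M A τ c c) * √(Dform M A τ d d) :=
  ⟨Dform_self_le_Bform_Pop hM hA hτ c,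
    abs_Bform_Pop_le (isHermitian_iff_isSymm.1 hM.isHermitian) hA τ c d⟩

/-- **Bounds for `L` in terms of `D`.** For any symmetric positive definite `A`, `M`, any
`p ≥ 0` and any `τ > 0`, the form `L(u,v) := B(u, P v)` satisfies, for all `v, w ∈ V_p`,
`L(v,v) ≥ ‖v‖²_D` and `|L(v,w)| ≤ 2 ‖v‖_D ‖w‖_D`, where `‖v‖_D := √D(v,v)`. -/
theorem Lform_Dform_bounds {n p : ℕ} (M A : Matrix (Fin n) (Fin n) ℝ)
    (hM : M.PosDef) (hA : A.PosDef) (τ : ℝ) (hτ : 0 < τ)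
    (c d : Fin (p + 1) → Fin n → ℝ) :
    Dform M A τ c c ≤ Bform M A τ c (fun s => Pop M A τ c s) ∧
      |Bform M A τ c (fun s => Pop M A τ d s)|
        ≤ 2 * Real.sqrt (Dform M A τ c c) * Real.sqrt (Dform M A τ d d) :=
  Lform_Dform_bounds_general hM.posSemidef hA hτ.le c d
end
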